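/- Entropy decomposition: For every 2 ≤ k ≤ d and every function f^{(k)} : 𝒞(k) → ℝ_{≥0}, one has Ent_{π_k}(f^{(k)}) = Σ_{S ∈ 𝒞(k−2)} π_{k−2}(S) · Ent_{π_{S,2}}(f_S^{(2)}) + Ent_{π_{k−2}}(f^{(k−2)}), where f_S^{(2)} : 𝒞_S(2) → ℝ_{≥0} is defined by f_S^{(2)}(T) := f^{(k)}(S ∪ T). -/

import Mathlib

/-!
Write `w S` for the mass of the top faces above `S`. Counting the faces of a given cardinality
between two nested faces (`card_between`) gives the local-to-global identity
`∑_{T ⊇ S, |T| = |S| + i} w T = (d - |S| choose i) * w S` (`sum_wgt_above`).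

For `S` of cardinality `k - 2`, let `A S h` be the `w`-weighted average of `h` over the faces
`T ⊇ S` of cardinality `k` (`upAvg` at level `k`).
Both the expectation of `h (S ∪ ·)` under `π_{S,2}` (`link_expectation`) and the twofold up
operator applied to `h` (`upOp_upOp`) equal `A S h`, the latter since exactly two faces lie
strictly between `S` and `T`. Averaging `A S h` over `S ∼ π_{k-2}` gives the expectation of
`h` under `π_k` (`tower`). The decomposition is then the chain rule for entropy: `tower` is used
with `h = f log f` and `h = f`, and the terms `A S f * log (A S f)` cancel.
-/

open Finset

noncomputable section

variable {E : Type*} [Fintype E] [DecidableEq E]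

/-- The faces of cardinality `k` of the set family `C`. -/
def faces (C : Finset (Finset E)) (k : ℕ) : Finset (Finset E) :=
  C.filter fun S => S.card = k

/-- `C` is a pure simplicial complex of dimension `d`: it is nonempty, closed under
taking subsets, and every face is contained in a face of cardinality `d`
(hence all maximal faces have cardinality `d`). -/
def IsPureComplex (C : Finset (Finset E)) (d : ℕ) : Prop :=
  C.Nonempty ∧ (∀ S ∈ C, ∀ T ⊆ S, T ∈ C) ∧ (∀ S ∈ C, ∃ T ∈ C, S ⊆ T ∧ T.card = d)

/-- `pid` is a probability distribution with full support on the top level faces. -/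
def IsTopDist (C : Finset (Finset E)) (d : ℕ) (pid : Finset E → ℝ) : Prop :=
  (∀ T ∈ faces C d, 0 < pid T) ∧ ∑ T ∈ faces C d, pid T = 1

/-- The (unnormalised) weight of a face: total top-level mass above it. -/
def wgt (C : Finset (Finset E)) (d : ℕ) (pid : Finset E → ℝ) (S : Finset E) : ℝ :=
  ∑ T ∈ (faces C d).filter (fun T => S ⊆ T), pid T

/-- The distribution `π_k` at level `k`: `π_k(S) ∝ Σ_{T ∈ C(d), T ⊇ S} π_d(T)`. -/
def piLev (C : Finset (Finset E)) (d : ℕ) (pid : Finset E → ℝ) (k : ℕ) (S : Finset E) : ℝ :=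
  if S ∈ faces C k then wgt C d pid S / ∑ T ∈ faces C k, wgt C d pid T else 0

/-- The level-`k` faces of the link of the face `S`. -/
def linkFaces (C : Finset (Finset E)) (S : Finset E) (k : ℕ) : Finset (Finset E) :=
  Finset.univ.powerset.filter fun T => S ∩ T = ∅ ∧ S ∪ T ∈ C ∧ T.card = k

/-- The distribution `π_{S,k}` on the level-`k` faces of the link of `S`:
`π_{S,k}(T) ∝ π_{|S|+k}(S ∪ T)`. -/
def linkPi (C : Finset (Finset E)) (d : ℕ) (pid : Finset E → ℝ) (S : Finset E) (k : ℕ)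
    (T : Finset E) : ℝ :=
  if T ∈ linkFaces C S k then
    piLev C d pid (S.card + k) (S ∪ T) /
      ∑ T' ∈ linkFaces C S k, piLev C d pid (S.card + k) (S ∪ T')
  else 0

/-- Generic up operator with respect to a measure `ν` on a collection `dom` of faces:
from `R` move to a superset `T ∈ dom` with probability proportional to `ν T`.
Acts on functions on `dom`, producing a function on the level below. -/
def upWith (ν : Finset E → ℝ) (dom : Finset (Finset E)) (f : Finset E → ℝ) (R : Finset E) : ℝ :=
  ∑ T ∈ dom.filter (fun T => R ⊆ T),
    (ν T / ∑ T' ∈ dom.filter (fun T' => R ⊆ T'), ν T') * f T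

/-- The up operator `P_k^↑`, acting on functions on `C(k+1)` and producing a function
on `C(k)`. -/
def upOp (C : Finset (Finset E)) (d : ℕ) (pid : Finset E → ℝ) (k : ℕ) :
    (Finset E → ℝ) → Finset E → ℝ :=
  upWith (piLev C d pid (k+1)) (faces C (k+1))

/-- The down operator `P_k^↓` (uniform removal of an element), acting on functions
on `C(k-1)` and producing a function on `C(k)`. -/
def downOp (k : ℕ) (g : Finset E → ℝ) (S : Finset E) : ℝ :=
  (1 / (k : ℝ)) * ∑ i ∈ S, g (S.erase i)

/-- The down-up walk `P_k^∨ = P_k^↓ P_{k-1}^↑` on `C(k)`, as an operator on functions. -/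
def downUp (C : Finset (Finset E)) (d : ℕ) (pid : Finset E → ℝ) (k : ℕ)
    (f : Finset E → ℝ) : Finset E → ℝ :=
  downOp k (upOp C d pid (k-1) f)

/-- The up-down walk `P_k^∧ = P_k^↑ P_{k+1}^↓` on `C(k)`, as an operator on functions. -/
def upDown (C : Finset (Finset E)) (d : ℕ) (pid : Finset E → ℝ) (k : ℕ)
    (f : Finset E → ℝ) : Finset E → ℝ :=
  upOp C d pid k (downOp (k+1) f)

/-- The up operator `P_{S,k}^↑` on the link of `S`, acting on functions on `C_S(k+1)`
and producing a function on `C_S(k)`. -/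
def linkUp (C : Finset (Finset E)) (d : ℕ) (pid : Finset E → ℝ) (S : Finset E) (k : ℕ) :
    (Finset E → ℝ) → Finset E → ℝ :=
  upWith (linkPi C d pid S (k+1)) (linkFaces C S (k+1))

/-- The up-down walk `P_{S,k}^∧` on the level-`k` faces of the link of `S`. -/
def linkUpDown (C : Finset (Finset E)) (d : ℕ) (pid : Finset E → ℝ) (S : Finset E) (k : ℕ)
    (f : Finset E → ℝ) : Finset E → ℝ :=
  linkUp C d pid S k (downOp (k+1) f)

/-- The local walk `G_S := 2 P_{S,1}^∧ - I` on the vertices of the link of `S`. -/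
def localWalk (C : Finset (Finset E)) (d : ℕ) (pid : Finset E → ℝ) (S : Finset E)
    (f : Finset E → ℝ) (T : Finset E) : ℝ :=
  2 * linkUpDown C d pid S 1 f T - f T

/-- Variance of `f` with respect to the measure `μ` on `dom`. -/
def pVar (μ : Finset E → ℝ) (dom : Finset (Finset E)) (f : Finset E → ℝ) : ℝ :=
  (∑ x ∈ dom, μ x * f x ^ 2) - (∑ x ∈ dom, μ x * f x) ^ 2

/-- Relative entropy `Ent_μ(f) = E_μ[f log f] - E_μ[f] log E_μ[f]` of `f` with respect to
the measure `μ` on `dom` (note `Real.log 0 = 0`, giving the convention `0 log 0 = 0`). -/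
def pEnt (μ : Finset E → ℝ) (dom : Finset (Finset E)) (f : Finset E → ℝ) : ℝ :=
  (∑ x ∈ dom, μ x * (f x * Real.log (f x))) -
    (∑ x ∈ dom, μ x * f x) * Real.log (∑ x ∈ dom, μ x * f x)

/-- The Dirichlet form `𝔈_P(f,g) = Σ_x μ(x) f(x) ((I - P) g)(x)` of a Markov operator `P`
reversible with respect to `μ` on `dom`. -/
def pDiri (μ : Finset E → ℝ) (dom : Finset (Finset E))
    (P : (Finset E → ℝ) → Finset E → ℝ) (f g : Finset E → ℝ) : ℝ :=
  ∑ x ∈ dom, μ x * f x * (g x - P g x)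

/-- The second largest eigenvalue of a Markov operator `P` reversible with respect to the
distribution `μ` on `dom`, via the variational characterisation: the supremum of Rayleigh
quotients `⟨f, Pf⟩_μ / ⟨f, f⟩_μ` over `f` orthogonal to the constants in `L²(μ)`. -/
noncomputable def lamTwo (μ : Finset E → ℝ) (dom : Finset (Finset E))
    (P : (Finset E → ℝ) → Finset E → ℝ) : ℝ :=
  sSup {r : ℝ | ∃ f : Finset E → ℝ,
    (∑ x ∈ dom, μ x * f x = 0) ∧ (∑ x ∈ dom, μ x * f x ^ 2 ≠ 0) ∧
    r = (∑ x ∈ dom, μ x * f x * P f x) / ∑ x ∈ dom, μ x * f x ^ 2}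

/-- The modified log-Sobolev constant `ρ(P)` of a Markov operator `P` reversible with
respect to `μ` on `dom`. -/
noncomputable def mlsConst (μ : Finset E → ℝ) (dom : Finset (Finset E))
    (P : (Finset E → ℝ) → Finset E → ℝ) : ℝ :=
  sInf {r : ℝ | ∃ f : Finset E → ℝ, (∀ x ∈ dom, 0 < f x) ∧ pEnt μ dom f ≠ 0 ∧
    r = pDiri μ dom P f (fun x => Real.log (f x)) / pEnt μ dom f}

/-! ### Weights of faces -/

/-- The `wgt`-weighted average of `h` over the faces of cardinality `t` containing `S`. -/
def upAvg (C : Finset (Finset E)) (d : ℕ) (pid : Finset E → ℝ) (t : ℕ) (h : Finset E → ℝ)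
    (S : Finset E) : ℝ :=
  (∑ T ∈ (faces C t).filter (fun T => S ⊆ T), wgt C d pid T * h T) /
    ∑ T ∈ (faces C t).filter (fun T => S ⊆ T), wgt C d pid T

lemma mem_faces {C : Finset (Finset E)} {k : ℕ} {S : Finset E} :
    S ∈ faces C k ↔ S ∈ C ∧ S.card = k := by
  simp [faces]

lemma card_between {C : Finset (Finset E)} {d : ℕ} (hC : IsPureComplex C d)
    {S U : Finset E} (hU : U ∈ C) (hSU : S ⊆ U) (i : ℕ) :
    ((faces C (S.card + i)).filter (fun T => S ⊆ T ∧ T ⊆ U)).card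
      = (U.card - S.card).choose i := by
  rw [← card_sdiff_of_subset hSU, ← card_powersetCard]
  refine card_bij' (fun T _ => T \ S) (fun T _ => S ∪ T) ?_ ?_ ?_ ?_
  · intro T hT
    obtain ⟨h1, h2, h3⟩ := mem_filter.1 hT
    have h4 := card_sdiff_add_card_eq_card h2
    have h5 := (mem_faces.1 h1).2
    exact mem_powersetCard.2 ⟨sdiff_subset_sdiff h3 le_rfl, by omega⟩
  · intro T hT
    obtain ⟨h1, h2⟩ := mem_powersetCard.1 hT
    have h3 : S ∪ T ⊆ U := union_subset hSU (h1.trans sdiff_subset)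
    have h4 : Disjoint S T := disjoint_of_subset_right h1 disjoint_sdiff
    exact mem_filter.2 ⟨mem_faces.2 ⟨hC.2.1 U hU _ h3, by rw [card_union_of_disjoint h4, h2]⟩,
      subset_union_left, h3⟩
  · intro T hT
    exact union_sdiff_of_subset (mem_filter.1 hT).2.1
  · intro T hT
    have h4 : Disjoint S T :=
      disjoint_of_subset_right (mem_powersetCard.1 hT).1 disjoint_sdiff
    exact union_sdiff_cancel_left h4

lemma wgt_pos {C : Finset (Finset E)} {d : ℕ} {pid : Finset E → ℝ}
    (hC : IsPureComplex C d) (hpid : IsTopDist C d pid) {S : Finset E} (hS : S ∈ C) :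
    0 < wgt C d pid S := by
  obtain ⟨T, hT, hST, hd⟩ := hC.2.2 S hS
  refine sum_pos (fun U hU => hpid.1 U (mem_filter.1 hU).1) ⟨T, ?_⟩
  exact mem_filter.2 ⟨mem_faces.2 ⟨hT, hd⟩, hST⟩

/-- Double counting of pairs `T ⊆ U` with `U` a top face and `T ⊇ S` of cardinality `|S| + i`. -/
lemma sum_wgt_above {C : Finset (Finset E)} {d : ℕ} (pid : Finset E → ℝ)
    (hC : IsPureComplex C d) (S : Finset E) (i : ℕ) :
    ∑ T ∈ (faces C (S.card + i)).filter (fun T => S ⊆ T), wgt C d pid T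
      = ((d - S.card).choose i : ℝ) * wgt C d pid S := by
  unfold wgt
  rw [sum_comm' (t' := (faces C d).filter (fun U => S ⊆ U))
    (s' := fun U => (faces C (S.card + i)).filter (fun T => S ⊆ T ∧ T ⊆ U)), mul_sum]
  · refine sum_congr rfl fun U hU => ?_
    obtain ⟨h1, h2⟩ := mem_filter.1 hU
    obtain ⟨h3, h4⟩ := mem_faces.1 h1
    rw [sum_const, card_between hC h3 h2, h4, nsmul_eq_mul]
  · intro T U
    simp only [mem_filter]
    constructor
    · rintro ⟨⟨a, b⟩, c, e⟩
      exact ⟨⟨a, b, e⟩, c, b.trans e⟩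
    · rintro ⟨⟨a, b, e⟩, c, -⟩
      exact ⟨⟨a, b⟩, c, e⟩

lemma sum_wgt_level {C : Finset (Finset E)} {d : ℕ} {pid : Finset E → ℝ}
    (hC : IsPureComplex C d) (hpid : IsTopDist C d pid) (k : ℕ) :
    ∑ T ∈ faces C k, wgt C d pid T = (d.choose k : ℝ) := by
  have h := sum_wgt_above pid hC ∅ k
  have h1 : wgt C d pid ∅ = 1 := by
    rw [← hpid.2]; simp [wgt]
  simpa [h1] using h

lemma piLev_eq {C : Finset (Finset E)} {d : ℕ} {pid : Finset E → ℝ}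
    (hC : IsPureComplex C d) (hpid : IsTopDist C d pid) {k : ℕ} {S : Finset E}
    (hS : S ∈ faces C k) : piLev C d pid k S = wgt C d pid S / (d.choose k : ℝ) := by
  rw [piLev, if_pos hS, sum_wgt_level hC hpid]

/-! ### Weighted averages and the up operators -/

/-- Weights proportional to `π_t` may be replaced by `wgt`: the normalisation of `π_t` cancels. -/
lemma avg_piLev {C : Finset (Finset E)} {d : ℕ} {pid : Finset E → ℝ}
    (hC : IsPureComplex C d) (hpid : IsTopDist C d pid) {t : ℕ} (ht : t ≤ d)
    (h : Finset E → ℝ) (S : Finset E) :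
    ∑ T ∈ (faces C t).filter (fun T => S ⊆ T),
      (piLev C d pid t T / ∑ T' ∈ (faces C t).filter (fun T' => S ⊆ T'), piLev C d pid t T') * h T
      = upAvg C d pid t h S := by
  have hc : (d.choose t : ℝ) ≠ 0 := by exact_mod_cast (Nat.choose_pos ht).ne'
  have hden : ∑ T ∈ (faces C t).filter (fun T => S ⊆ T), piLev C d pid t T
      = (∑ T ∈ (faces C t).filter (fun T => S ⊆ T), wgt C d pid T) / (d.choose t : ℝ) := by
    rw [sum_div]
    exact sum_congr rfl fun T hT => piLev_eq hC hpid (mem_filter.1 hT).1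
  rw [upAvg, sum_div, hden]
  refine sum_congr rfl fun T hT => ?_
  rw [piLev_eq hC hpid (mem_filter.1 hT).1, div_div_div_cancel_right₀ hc]
  ring

lemma upOp_eq {C : Finset (Finset E)} {d : ℕ} {pid : Finset E → ℝ}
    (hC : IsPureComplex C d) (hpid : IsTopDist C d pid) {t : ℕ} (ht : t + 1 ≤ d)
    (h : Finset E → ℝ) (S : Finset E) :
    upOp C d pid t h S = upAvg C d pid (t + 1) h S :=
  avg_piLev hC hpid ht h S

lemma upOp_upOp {C : Finset (Finset E)} {d : ℕ} {pid : Finset E → ℝ}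
    (hC : IsPureComplex C d) (hpid : IsTopDist C d pid) {j : ℕ} (hj : j + 2 ≤ d)
    (h : Finset E → ℝ) {S : Finset E} (hS : S ∈ faces C j) :
    upOp C d pid j (upOp C d pid (j + 1) h) S = upAvg C d pid (j + 2) h S := by
  obtain ⟨hSC, rfl⟩ := mem_faces.1 hS
  rw [upOp_eq hC hpid (by omega), upAvg, sum_wgt_above pid hC, upAvg, sum_wgt_above pid hC]
  set n := d - S.card with hn
  have hn2 : 2 ≤ n := by omega
  -- The weight of `R` cancels, leaving a double sum over the chains `S ⊆ R ⊆ T`.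
  have h1 : ∀ R ∈ (faces C (S.card + 1)).filter (fun R => S ⊆ R),
      wgt C d pid R * upOp C d pid (S.card + 1) h R =
        ∑ T ∈ (faces C (S.card + 2)).filter (fun T => R ⊆ T),
          wgt C d pid T * h T / ((n : ℝ) - 1) := by
    intro R hR
    obtain ⟨h2, h3⟩ := mem_faces.1 (mem_filter.1 hR).1
    have hw := wgt_pos hC hpid h2
    have h4 := sum_wgt_above pid hC R 1
    rw [h3, show d - (S.card + 1) = n - 1 by omega, Nat.choose_one_right,
      Nat.cast_sub (by omega)] at h4
    rw [upOp_eq hC hpid (by omega), upAvg, h4, ← sum_div]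
    have : (n : ℝ) - 1 ≠ 0 := by
      have : (2 : ℝ) ≤ n := by exact_mod_cast hn2
      linarith
    push_cast
    field_simp
  rw [sum_congr rfl h1, sum_comm' (t' := (faces C (S.card + 2)).filter (fun T => S ⊆ T))
    (s' := fun T => (faces C (S.card + 1)).filter (fun R => S ⊆ R ∧ R ⊆ T))]
  · have h5 : ∀ T ∈ (faces C (S.card + 2)).filter (fun T => S ⊆ T),
        ∑ R ∈ (faces C (S.card + 1)).filter (fun R => S ⊆ R ∧ R ⊆ T),
          wgt C d pid T * h T / ((n : ℝ) - 1) = (2 / ((n : ℝ) - 1)) * (wgt C d pid T * h T) := by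
      intro T hT
      obtain ⟨h2, h3⟩ := mem_filter.1 hT
      obtain ⟨h4, h5⟩ := mem_faces.1 h2
      rw [sum_const, card_between hC h4 h3, h5, nsmul_eq_mul]
      simp
      ring
    rw [sum_congr rfl h5, ← mul_sum, Nat.choose_one_right, Nat.cast_choose_two]
    have hw := wgt_pos hC hpid hSC
    have : (2 : ℝ) ≤ n := by exact_mod_cast hn2
    have h6 : (n : ℝ) - 1 ≠ 0 := by linarith
    have h7 : (n : ℝ) ≠ 0 := by linarith
    field_simp
  · intro R T
    simp only [mem_filter]
    constructor
    · rintro ⟨⟨a, b⟩, c, e⟩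
      exact ⟨⟨a, b, e⟩, c, b.trans e⟩
    · rintro ⟨⟨a, b, e⟩, c, -⟩
      exact ⟨⟨a, b⟩, c, e⟩

/-! ### Links and the law of total expectation -/

/-- `T ↦ S ∪ T` identifies the level-`i` faces of the link of `S` with the faces of
cardinality `|S| + i` containing `S`. -/
lemma sum_linkFaces (C : Finset (Finset E)) (S : Finset E) (i : ℕ) (g : Finset E → ℝ) :
    ∑ T ∈ linkFaces C S i, g (S ∪ T)
      = ∑ T ∈ (faces C (S.card + i)).filter (fun T => S ⊆ T), g T := by
  refine sum_bij' (fun T _ => S ∪ T) (fun T _ => T \ S) ?_ ?_ ?_ ?_ ?_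
  · intro T hT
    obtain ⟨h1, h2, h3⟩ := (mem_filter.1 hT).2
    refine mem_filter.2 ⟨mem_faces.2 ⟨h2, ?_⟩, subset_union_left⟩
    rw [card_union_of_disjoint (disjoint_iff_inter_eq_empty.2 h1), h3]
  · intro T hT
    obtain ⟨h1, h2⟩ := mem_filter.1 hT
    obtain ⟨h3, h4⟩ := mem_faces.1 h1
    have h5 := card_sdiff_add_card_eq_card h2
    refine mem_filter.2 ⟨by simp, inter_sdiff_self S T, ?_, by omega⟩
    rwa [union_sdiff_of_subset h2]
  · intro T hT
    exact union_sdiff_cancel_left (disjoint_iff_inter_eq_empty.2 (mem_filter.1 hT).2.1)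
  · intro T hT
    exact union_sdiff_of_subset (mem_filter.1 hT).2
  · intro T hT
    rfl

lemma link_expectation {C : Finset (Finset E)} {d : ℕ} {pid : Finset E → ℝ}
    (hC : IsPureComplex C d) (hpid : IsTopDist C d pid) {S : Finset E} {i : ℕ}
    (hi : S.card + i ≤ d) (h : Finset E → ℝ) :
    ∑ T ∈ linkFaces C S i, linkPi C d pid S i T * h (S ∪ T)
      = upAvg C d pid (S.card + i) h S := by
  rw [← avg_piLev hC hpid hi h S, ← sum_linkFaces C S i, ← sum_linkFaces C S i]
  refine sum_congr rfl fun T hT => ?_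
  rw [linkPi, if_pos hT]

/-- Law of total expectation: averaging over the faces above a `π_j`-random face of
cardinality `j` gives the `π_{j+i}`-expectation. -/
lemma tower {C : Finset (Finset E)} {d : ℕ} {pid : Finset E → ℝ}
    (hC : IsPureComplex C d) (hpid : IsTopDist C d pid) {j i : ℕ} (hj : j + i ≤ d)
    (h : Finset E → ℝ) :
    ∑ S ∈ faces C j, piLev C d pid j S * upAvg C d pid (j + i) h S
      = ∑ T ∈ faces C (j + i), piLev C d pid (j + i) T * h T := by
  have hc1 : (d.choose j : ℝ) ≠ 0 := by exact_mod_cast (Nat.choose_pos (by omega)).ne'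
  have hc2 : ((d - j).choose i : ℝ) ≠ 0 := by
    exact_mod_cast (Nat.choose_pos (by omega)).ne'
  have hc3 : (d.choose (j + i) : ℝ) ≠ 0 := by exact_mod_cast (Nat.choose_pos hj).ne'
  have hc : (d.choose (j + i) : ℝ) * ((j + i).choose j : ℝ)
      = (d.choose j : ℝ) * ((d - j).choose i : ℝ) := by
    have := Nat.choose_mul (n := d) (k := j + i) (s := j) (by omega)
    rw [Nat.add_sub_cancel_left] at this
    exact_mod_cast this
  have h1 : ∀ S ∈ faces C j, piLev C d pid j S * upAvg C d pid (j + i) h S =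
      ∑ T ∈ (faces C (j + i)).filter (fun T => S ⊆ T),
        wgt C d pid T * h T / ((d.choose j : ℝ) * ((d - j).choose i : ℝ)) := by
    intro S hS
    rw [piLev_eq hC hpid hS]
    obtain ⟨hSC, rfl⟩ := mem_faces.1 hS
    have hw := wgt_pos hC hpid hSC
    rw [upAvg, sum_wgt_above pid hC, ← sum_div]
    field_simp
  rw [sum_congr rfl h1, sum_comm' (t' := faces C (j + i))
    (s' := fun T => (faces C j).filter (fun S => S ⊆ T))]
  · refine sum_congr rfl fun T hT => ?_
    rw [piLev_eq hC hpid hT]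
    obtain ⟨hTC, hT2⟩ := mem_faces.1 hT
    have h2 := card_between hC hTC (empty_subset T) j
    simp only [card_empty, zero_add, empty_subset, true_and, tsub_zero, hT2] at h2
    rw [sum_const, h2, nsmul_eq_mul, ← hc]
    have hc4 : ((j + i).choose j : ℝ) ≠ 0 := by
      exact_mod_cast (Nat.choose_pos (by omega)).ne'
    field_simp
  · intro S T
    simp only [mem_filter]
    tauto

/-- **Entropy decomposition.** For `2 ≤ k ≤ d` and `f : C(k) → ℝ≥0`,
`Ent_{π_k}(f) = Σ_{S ∈ C(k-2)} π_{k-2}(S) Ent_{π_{S,2}}(f_S^{(2)}) + Ent_{π_{k-2}}(f^{(k-2)})`,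
where `f_S^{(2)}(T) = f(S ∪ T)` and `f^{(k-2)} = P_{k-2}^↑ P_{k-1}^↑ f`. -/
theorem ent_decomposition {E : Type*} [Fintype E] [DecidableEq E]
    (C : Finset (Finset E)) (d : ℕ) (pid : Finset E → ℝ)
    (hC : IsPureComplex C d) (hpid : IsTopDist C d pid)
    (k : ℕ) (hk2 : 2 ≤ k) (hkd : k ≤ d) (f : Finset E → ℝ)
    (hf : ∀ S ∈ faces C k, 0 ≤ f S) :
    pEnt (piLev C d pid k) (faces C k) f =
      (∑ S ∈ faces C (k-2), piLev C d pid (k-2) S *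
        pEnt (linkPi C d pid S 2) (linkFaces C S 2) (fun T => f (S ∪ T))) +
      pEnt (piLev C d pid (k-2)) (faces C (k-2))
        (upOp C d pid (k-2) (upOp C d pid (k-1) f)) := by
  obtain ⟨j, rfl⟩ : ∃ j, k = j + 2 := ⟨k - 2, by omega⟩
  rw [show j + 2 - 2 = j by omega, show j + 2 - 1 = j + 1 by omega]
  have hlink : ∀ S ∈ faces C j,
      pEnt (linkPi C d pid S 2) (linkFaces C S 2) (fun T => f (S ∪ T)) =
        upAvg C d pid (j + 2) (fun T => f T * Real.log (f T)) S -
          upAvg C d pid (j + 2) f S * Real.log (upAvg C d pid (j + 2) f S) := by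
    intro S hS
    obtain ⟨-, rfl⟩ := mem_faces.1 hS
    rw [pEnt, link_expectation hC hpid hkd f,
      link_expectation hC hpid hkd (fun T => f T * Real.log (f T))]
  have hlow : pEnt (piLev C d pid j) (faces C j) (upOp C d pid j (upOp C d pid (j + 1) f)) =
      pEnt (piLev C d pid j) (faces C j) (upAvg C d pid (j + 2) f) := by
    have h : ∀ S ∈ faces C j, upOp C d pid j (upOp C d pid (j + 1) f) S =
        upAvg C d pid (j + 2) f S := fun S hS => upOp_upOp hC hpid hkd f hS
    unfold pEnt
    congr! 2 with S hS S hS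
    · rw [h S hS]
    · exact sum_congr rfl fun S hS => by rw [h S hS]
    · exact congrArg _ (sum_congr rfl fun S hS => by rw [h S hS])
  rw [hlow, sum_congr rfl fun S hS => by rw [hlink S hS, mul_sub], sum_sub_distrib, pEnt, pEnt,
    tower hC hpid hkd f, tower hC hpid hkd (fun T => f T * Real.log (f T))]
  ring
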